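/- Let D ⊆ ℂⁿ be a domain, z ∈ D, ψ plurisubharmonic on D with A²(D, e^{−ψ}) ≠ {0}, and ξ ∈ ℓ₁^{(n)}. Then there exists a holomorphic function F₀ ∈ A²(D, e^{−ψ}) with F₀ ≠ 0 such that K^ψ_{ξ,D}(z) = |(ξ·F₀)(z)|² / ∫_D |F₀|² e^{−ψ}; i.e., the supremum defining the ξ-Bergman kernel is attained. -/

import Mathlib

open MeasureTheory Filter Topology Complex
open scoped ENNReal
noncomputable section

/-- The total degree `|α|` of a multi-index. -/
def mdeg {n : ℕ} (α : Fin n → ℕ) : ℕ := ∑ i, α i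

/-- The factorial `α!` of a multi-index. -/
def mfact {n : ℕ} (α : Fin n → ℕ) : ℕ := ∏ i, Nat.factorial (α i)

/-- Partial derivative in the `i`-th coordinate direction. -/
def pderivC {n : ℕ} (i : Fin n) (f : (Fin n → ℂ) → ℂ) : (Fin n → ℂ) → ℂ :=
  fun z => deriv (fun t : ℂ => f (Function.update z i t)) (z i)

/-- Iterated partial derivative `∂^{|α|} f / ∂z^α`. -/
def multiDeriv {n : ℕ} (α : Fin n → ℕ) (f : (Fin n → ℂ) → ℂ) : (Fin n → ℂ) → ℂ :=
  (List.finRange n).foldr (fun i g => (pderivC i)^[α i] g) f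

/-- Membership in `ℓ₁^{(n)}`: `∑_α |ξ_α| ρ^{|α|} < ∞` for every `ρ > 0`. -/
def MemL1 {n : ℕ} (ξ : (Fin n → ℕ) → ℂ) : Prop :=
  ∀ ρ : ℝ, 0 < ρ → Summable fun α : Fin n → ℕ => ‖ξ α‖ * ρ ^ mdeg α

/-- The action `(ξ·f)(z) = ∑_α ξ_α f^{(α)}(z)/α!`. -/
def xiAct {n : ℕ} (ξ : (Fin n → ℕ) → ℂ) (f : (Fin n → ℂ) → ℂ) (z : Fin n → ℂ) : ℂ :=
  ∑' α : Fin n → ℕ, ξ α * multiDeriv α f z / (mfact α : ℂ)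

/-- Plurisubharmonicity of an `EReal`-valued function on a set: upper semicontinuity
together with the sub-mean value inequality on every complex circle whose closed disc
is contained in the set (expressed via integrable real-valued majorants). -/
def PlurisubharmonicOn {E : Type*} [NormedAddCommGroup E] [NormedSpace ℂ E]
    (f : E → EReal) (s : Set E) : Prop :=
  UpperSemicontinuousOn f s ∧
  ∀ z ∈ s, ∀ v : E, (∀ t : ℂ, ‖t‖ ≤ 1 → z + t • v ∈ s) →
    ∀ g : ℝ → ℝ, IntervalIntegrable g volume 0 (2 * Real.pi) →
      (∀ θ : ℝ, f (z + Complex.exp (θ * Complex.I) • v) ≤ (g θ : EReal)) →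
      f z ≤ (((2 * Real.pi)⁻¹ * ∫ θ in (0:ℝ)..(2 * Real.pi), g θ : ℝ) : EReal)

/-- The weighted `L²` integral `∫_D |f|² e^{-ψ}`. -/
def wL2 {n : ℕ} (D : Set (Fin n → ℂ)) (ψ : (Fin n → ℂ) → ℝ) (f : (Fin n → ℂ) → ℂ) : ℝ≥0∞ :=
  ∫⁻ z in D, ENNReal.ofReal (‖f z‖ ^ 2 * Real.exp (-ψ z))

/-- Membership in the weighted Bergman space `A²(D, e^{-ψ})`. -/
def MemA2 {n : ℕ} (D : Set (Fin n → ℂ)) (ψ : (Fin n → ℂ) → ℝ) (f : (Fin n → ℂ) → ℂ) : Prop :=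
  DifferentiableOn ℂ f D ∧ wL2 D ψ f < ⊤

/-- The weighted `ξ`-Bergman kernel `K^ψ_{ξ,D}(z)`. -/
def xiBergman {n : ℕ} (ξ : (Fin n → ℕ) → ℂ) (D : Set (Fin n → ℂ))
    (ψ : (Fin n → ℂ) → ℝ) (z : Fin n → ℂ) : ℝ≥0∞ :=
  ⨆ f : {f // MemA2 D ψ f}, ENNReal.ofReal (‖xiAct ξ f.1 z‖ ^ 2) / wL2 D ψ f.1

/-- The locally uniformly bounded property for a functional-valued function on `D`. -/
def LocUnifBdd {n m : ℕ} (ξ : (Fin m → ℂ) → (Fin n → ℕ) → ℂ) (D : Set (Fin m → ℂ)) : Prop :=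
  ∀ w ∈ D, ∀ ρ : ℝ, 0 < ρ → ∃ V ∈ 𝓝 w, ∃ C : ℝ,
    ∀ w' ∈ V ∩ D, (∑' α : Fin n → ℕ, ENNReal.ofReal (‖ξ w' α‖ * ρ ^ mdeg α)) ≤ ENNReal.ofReal C

/-!
A weight that is locally bounded above is harmless for the mean-value inequality, so on a small
ball around each point of `D` a holomorphic function is bounded by its weighted `L²` norm. Hence
norm limits in `A²(D, e^{-ψ})` are locally uniform limits, `A²(D, e^{-ψ})` is a Hilbert space, and
by the Cauchy estimates `f ↦ (ξ·f)(z)` is a bounded linear functional on it. The kernel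
`K^ψ_{ξ,D}(z)` is the square of the norm of this functional, and a functional on a Hilbert space
attains its norm at its Riesz representative.
-/

section UniformLimits

open Metric Set

theorem mapsTo_closedBall_two_mul_of_norm_le {X F : Type*} [PseudoMetricSpace X]
    [SeminormedAddCommGroup F] {f : X → F} {c : X} {R M : ℝ}
    (hM : ∀ w ∈ ball c R, ‖f w‖ ≤ M) : MapsTo f (ball c R) (closedBall (f c) (2 * M)) := by
  intro w hw
  have hc : c ∈ ball c R := mem_ball_self (pos_of_mem_ball hw)
  calc dist (f w) (f c) ≤ ‖f w‖ + ‖f c‖ := dist_le_norm_add_norm _ _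
    _ ≤ 2 * M := by linarith [hM w hw, hM c hc]

variable {E F ι : Type*} [NormedAddCommGroup E] [NormedSpace ℂ E] [NormedAddCommGroup F]
  [NormedSpace ℂ F] {l : Filter ι}

theorem uniformCauchySeqOn_fderiv {f : ι → E → F} {U V : Set E} {δ : ℝ} (hδ : 0 < δ)
    (hVU : thickening δ V ⊆ U) (hd : ∀ᶠ i in l, DifferentiableOn ℂ (f i) U)
    (hf : UniformCauchySeqOn f l U) : UniformCauchySeqOn (fun i => fderiv ℂ (f i)) l V := by
  intro u hu
  obtain ⟨ε, hε, hεu⟩ := mem_uniformity_dist.1 hu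
  filter_upwards [hf _ (dist_mem_uniformity (show 0 < ε * δ / 4 by positivity)),
    hd.prod_mk hd] with ⟨i, j⟩ hij ⟨hi, hj⟩ x hx
  have hball : ball x δ ⊆ U := (ball_subset_thickening hx δ).trans hVU
  have hdiff : ∀ {g : E → F}, DifferentiableOn ℂ g U → DifferentiableAt ℂ g x := fun hg =>
    hg.differentiableAt (mem_of_superset (ball_mem_nhds x hδ) hball)
  have hbound : ‖fderiv ℂ (f i - f j) x‖ ≤ 2 * (ε * δ / 4) / δ :=
    norm_fderiv_le_div_of_mapsTo_ball ((hi.sub hj).mono hball)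
      (mapsTo_closedBall_two_mul_of_norm_le fun w hw => by
        simpa only [Pi.sub_apply, ← dist_eq_norm] using (hij w (hball hw)).le) hδ
  rw [fderiv_sub (hdiff hi) (hdiff hj), ← dist_eq_norm] at hbound
  refine hεu (hbound.trans_lt ?_)
  field_simp
  norm_num

variable [CompleteSpace F] [l.NeBot]

theorem differentiableOn_of_tendstoUniformlyOn {f : ι → E → F} {g : E → F} {U : Set E}
    (hU : IsOpen U) (hd : ∀ᶠ i in l, DifferentiableOn ℂ (f i) U)
    (hfg : TendstoUniformlyOn f g l U) : DifferentiableOn ℂ g U := by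
  intro x hx
  obtain ⟨δ, hδ, hδU⟩ := (isCompact_singleton (x := x)).exists_thickening_subset_open hU
    (singleton_subset_iff.2 hx)
  have hballU : ball x δ ⊆ U := by simpa only [thickening_singleton] using hδU
  have hcauchy : UniformCauchySeqOn (fun i => fderiv ℂ (f i)) l (ball x (δ / 2)) := by
    refine uniformCauchySeqOn_fderiv (half_pos hδ) ?_ hd hfg.uniformCauchySeqOn
    rwa [thickening_ball (half_pos hδ) (half_pos hδ), add_halves]
  have hlim : ∀ y ∈ ball x (δ / 2), ∃ L, Tendsto (fun i => fderiv ℂ (f i) y) l (𝓝 L) :=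
    fun y hy => cauchy_map_iff_exists_tendsto.1 (hcauchy.cauchy_map hy)
  choose! g' hg' using hlim
  have hg'x : HasFDerivAt g (g' x) x := by
    refine hasFDerivAt_of_tendstoUniformlyOnFilter (l := l) (f := f)
      ((hcauchy.tendstoUniformlyOn_of_tendsto hg').tendstoUniformlyOnFilter.mono_right
        (le_principal_iff.2 (ball_mem_nhds x (half_pos hδ)))) ?_ ?_
    · filter_upwards [hd.prod_mk (hU.mem_nhds hx)] with ⟨i, y⟩ ⟨hi, hy⟩
      exact (hi.differentiableAt (hU.mem_nhds hy)).hasFDerivAt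
    · filter_upwards [hU.mem_nhds hx] with y hy using hfg.tendsto_at hy
  exact hg'x.differentiableAt.differentiableWithinAt

theorem exists_differentiableOn_of_uniformCauchySeqOn {f : ι → E → F} {D : Set E}
    (hd : ∀ᶠ i in l, DifferentiableOn ℂ (f i) D)
    (hf : ∀ x ∈ D, ∃ U ⊆ D, IsOpen U ∧ x ∈ U ∧ UniformCauchySeqOn f l U) :
    ∃ g : E → F, DifferentiableOn ℂ g D ∧ ∀ x ∈ D, Tendsto (fun i => f i x) l (𝓝 (g x)) := by
  have hlim : ∀ x ∈ D, ∃ y, Tendsto (fun i => f i x) l (𝓝 y) := fun x hx =>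
    have ⟨_, _, _, hxU, hfU⟩ := hf x hx
    cauchy_map_iff_exists_tendsto.1 (hfU.cauchy_map hxU)
  choose! g hg using hlim
  refine ⟨g, fun x hx => ?_, hg⟩
  obtain ⟨U, hUD, hU, hxU, hfU⟩ := hf x hx
  have hgU : DifferentiableOn ℂ g U :=
    differentiableOn_of_tendstoUniformlyOn hU (hd.mono fun _ hi => hi.mono hUD)
      (hfU.tendstoUniformlyOn_of_tendsto fun y hy => hg y (hUD hy))
  exact (hgU.differentiableAt (hU.mem_nhds hxU)).differentiableWithinAt

theorem dist_dslope_deriv_le {f : ℂ → F} {c z : ℂ} {R M : ℝ}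
    (hd : DifferentiableOn ℂ f (ball c R)) (hM : ∀ w ∈ ball c R, ‖f w‖ ≤ M) (hz : z ∈ ball c R) :
    dist (dslope f c z) (deriv f c) ≤ 2 * (2 * M / R) / R * dist z c := by
  have hslope : ∀ w ∈ ball c R, ‖dslope f c w‖ ≤ 2 * M / R := fun w hw =>
    norm_dslope_le_div_of_mapsTo_ball hd (mapsTo_closedBall_two_mul_of_norm_le hM) hw
  have hd' : DifferentiableOn ℂ (dslope f c) (ball c R) :=
    (differentiableOn_dslope (ball_mem_nhds c (pos_of_mem_ball hz))).2 hd
  simpa only [dslope_same] using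
    dist_le_div_mul_dist_of_mapsTo_ball hd' (mapsTo_closedBall_two_mul_of_norm_le hslope) hz

theorem tendstoUniformlyOn_slope_fderiv_apply {f : E → F} {U V : Set E} {v : E} {r M : ℝ}
    (hr : 0 < r) (hU : IsOpen U) (hf : DifferentiableOn ℂ f U) (hM : ∀ w ∈ U, ‖f w‖ ≤ M)
    (hVU : ∀ w ∈ V, ∀ t ∈ ball (0 : ℂ) r, w + t • v ∈ U) :
    TendstoUniformlyOn (fun (t : ℂ) w => slope (fun s : ℂ => f (w + s • v)) 0 t)
      (fun w => fderiv ℂ f w v) (𝓝[≠] 0) V := by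
  have hderiv : ∀ w ∈ V, deriv (fun s : ℂ => f (w + s • v)) 0 = fderiv ℂ f w v := fun w hw => by
    have hwU : w ∈ U := by simpa using hVU w hw 0 (mem_ball_self hr)
    exact (hf.differentiableAt (hU.mem_nhds hwU)).lineDeriv_eq_fderiv
  rw [Metric.tendstoUniformlyOn_iff]
  intro ε hε
  have hsmall : ∀ᶠ t : ℂ in 𝓝 0, 2 * (2 * M / r) / r * dist t 0 < ε := by
    refine Tendsto.eventually_lt_const hε ?_
    exact Continuous.tendsto' (by fun_prop) _ _ (by simp)
  filter_upwards [nhdsWithin_le_nhds hsmall, nhdsWithin_le_nhds (ball_mem_nhds 0 hr),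
    self_mem_nhdsWithin] with t htε htr ht0 w hw
  rw [dist_comm, ← hderiv w hw, ← dslope_of_ne _ ht0]
  refine (dist_dslope_deriv_le ?_ (fun s hs => hM _ (hVU w hw s hs)) htr).trans_lt htε
  exact hf.comp (by fun_prop) fun s hs => hVU w hw s hs

theorem differentiableOn_fderiv_apply {f : E → F} {U : Set E} (hU : IsOpen U)
    (hf : DifferentiableOn ℂ f U) (v : E) : DifferentiableOn ℂ (fun w => fderiv ℂ f w v) U := by
  intro x hx
  have hbound : ∀ᶠ w in 𝓝 x, w ∈ U ∧ ‖f w‖ < ‖f x‖ + 1 :=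
    (hU.eventually_mem hx).and <|
      (hf.continuousOn.continuousAt (hU.mem_nhds hx)).norm.eventually_lt_const (lt_add_one _)
  obtain ⟨W, hWU, hW, hxW⟩ := _root_.eventually_nhds_iff.1 hbound
  have hfW : DifferentiableOn ℂ f W := hf.mono fun w hw => (hWU w hw).1
  have htranslate : ∀ᶠ p : E × ℂ in 𝓝 (x, 0), p.1 + p.2 • v ∈ W :=
    ContinuousAt.eventually_mem (by fun_prop) (hW.mem_nhds (by simpa using hxW))
  obtain ⟨r, hr, hball⟩ := Metric.eventually_nhds_iff_ball.1 htranslate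
  have hmem : ∀ w ∈ ball x r, ∀ t ∈ ball (0 : ℂ) r, w + t • v ∈ W := fun w hw t ht =>
    hball (w, t) (by rw [← ball_prod_same]; exact ⟨hw, ht⟩)
  have hslope : ∀ᶠ t : ℂ in 𝓝[≠] 0,
      DifferentiableOn ℂ (fun w => slope (fun s : ℂ => f (w + s • v)) 0 t) (ball x r) := by
    filter_upwards [nhdsWithin_le_nhds (ball_mem_nhds 0 hr)] with t ht
    have hshift : ∀ s ∈ ball (0 : ℂ) r, DifferentiableOn ℂ (fun w => f (w + s • v)) (ball x r) :=
      fun s hs => hfW.comp (by fun_prop) fun w hw => hmem w hw s hs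
    simp only [slope_def_module]
    exact ((hshift t ht).fun_sub (hshift 0 (mem_ball_self hr))).fun_const_smul _
  have hdiff : DifferentiableOn ℂ (fun w => fderiv ℂ f w v) (ball x r) :=
    differentiableOn_of_tendstoUniformlyOn isOpen_ball hslope
      (tendstoUniformlyOn_slope_fderiv_apply hr hW hfW (fun w hw => (hWU w hw).2.le) hmem)
  exact (hdiff.differentiableAt (ball_mem_nhds x hr)).differentiableWithinAt

end UniformLimits

section PartialDerivatives

open Metric Set

/-- A linear operator on functions that is local to `D` and maps holomorphic functions on `D` to
holomorphic functions on `D`. Additivity is only required on holomorphic functions, because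
`pderivC` takes the value `0` where a function has no partial derivative. -/
structure IsHolomorphicOperatorOn {E : Type*} [NormedAddCommGroup E] [NormedSpace ℂ E]
    (D : Set E) (T : (E → ℂ) → E → ℂ) : Prop where
  differentiableOn : ∀ {f}, DifferentiableOn ℂ f D → DifferentiableOn ℂ (T f) D
  congr : ∀ {f g}, EqOn f g D → EqOn (T f) (T g) D
  add : ∀ {f g}, DifferentiableOn ℂ f D → DifferentiableOn ℂ g D → EqOn (T (f + g)) (T f + T g) D
  smul : ∀ (c : ℂ) (f), EqOn (T (c • f)) (c • T f) D

namespace IsHolomorphicOperatorOn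

variable {E : Type*} [NormedAddCommGroup E] [NormedSpace ℂ E] {D : Set E}
  {S T : (E → ℂ) → E → ℂ}

theorem id : IsHolomorphicOperatorOn D (id : (E → ℂ) → E → ℂ) where
  differentiableOn hf := hf
  congr hfg := hfg
  add _ _ := eqOn_refl _ _
  smul _ _ := eqOn_refl _ _

theorem comp (hT : IsHolomorphicOperatorOn D T) (hS : IsHolomorphicOperatorOn D S) :
    IsHolomorphicOperatorOn D (T ∘ S) where
  differentiableOn hf := hT.differentiableOn (hS.differentiableOn hf)
  congr hfg := hT.congr (hS.congr hfg)
  add hf hg := (hT.congr (hS.add hf hg)).trans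
    (hT.add (hS.differentiableOn hf) (hS.differentiableOn hg))
  smul c f := (hT.congr (hS.smul c f)).trans (hT.smul c (S f))

theorem iterate (hT : IsHolomorphicOperatorOn D T) (k : ℕ) : IsHolomorphicOperatorOn D T^[k] := by
  induction k with
  | zero => exact .id
  | succ k ih => exact ih.comp hT

end IsHolomorphicOperatorOn

variable {n : ℕ} {D : Set (Fin n → ℂ)}

theorem pderivC_eq_fderiv (i : Fin n) {f : (Fin n → ℂ) → ℂ} {w : Fin n → ℂ}
    (hf : DifferentiableAt ℂ f w) : pderivC i f w = fderiv ℂ f w (Pi.single i 1) := by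
  have h : HasFDerivAt f (fderiv ℂ f w) (Function.update w i (w i)) := by
    rw [Function.update_eq_self]
    exact hf.hasFDerivAt
  exact (h.comp_hasDerivAt (w i) (hasDerivAt_update w i (w i))).deriv

theorem isHolomorphicOperatorOn_pderivC (hD : IsOpen D) (i : Fin n) :
    IsHolomorphicOperatorOn D (pderivC i) where
  differentiableOn {f} hf := (differentiableOn_fderiv_apply hD hf (Pi.single i 1)).congr fun w hw =>
    pderivC_eq_fderiv i (hf.differentiableAt (hD.mem_nhds hw))
  congr {f g} hfg w hw := by
    have hupdate : Tendsto (Function.update w i) (𝓝 (w i)) (𝓝 w) :=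
      (continuous_const.update i continuous_id).tendsto' _ _ (Function.update_eq_self i w)
    exact EventuallyEq.deriv_eq (hupdate.eventually (hfg.eventuallyEq_of_mem (hD.mem_nhds hw)))
  add {f g} hf hg w hw := by
    have hfw := hf.differentiableAt (hD.mem_nhds hw)
    have hgw := hg.differentiableAt (hD.mem_nhds hw)
    rw [Pi.add_apply, pderivC_eq_fderiv i hfw, pderivC_eq_fderiv i hgw,
      pderivC_eq_fderiv i (hfw.add hgw), fderiv_add hfw hgw, add_apply]
  smul c f w _ := deriv_const_smul_field c _

theorem pderivC_iterate_update (i : Fin n) (k : ℕ) (f : (Fin n → ℂ) → ℂ) (w : Fin n → ℂ) (t : ℂ) :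
    (pderivC i)^[k] f (Function.update w i t) =
      iteratedDeriv k (fun s => f (Function.update w i s)) t := by
  induction k generalizing t with
  | zero => simp only [Function.iterate_zero_apply, iteratedDeriv_zero]
  | succ k ih =>
    rw [Function.iterate_succ_apply', iteratedDeriv_succ, ← funext ih]
    simp only [pderivC, Function.update_idem, Function.update_self]

/-- The part of `multiDeriv α` that only differentiates in the coordinates listed in `l`; the full
derivative is the case `l = List.finRange n`, and estimates are proved by induction on `l`. -/
def multiDerivAlong (α : Fin n → ℕ) (l : List (Fin n)) (f : (Fin n → ℂ) → ℂ) :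
    (Fin n → ℂ) → ℂ :=
  l.foldr (fun i g => (pderivC i)^[α i] g) f

theorem isHolomorphicOperatorOn_multiDerivAlong (hD : IsOpen D) (α : Fin n → ℕ)
    (l : List (Fin n)) : IsHolomorphicOperatorOn D (multiDerivAlong α l) := by
  induction l with
  | nil => exact .id
  | cons i l ih => exact ((isHolomorphicOperatorOn_pderivC hD i).iterate (α i)).comp ih

theorem isHolomorphicOperatorOn_multiDeriv (hD : IsOpen D) (α : Fin n → ℕ) :
    IsHolomorphicOperatorOn D (multiDeriv α) :=
  isHolomorphicOperatorOn_multiDerivAlong hD α (List.finRange n)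

theorem norm_pderivC_iterate_le {g : (Fin n → ℂ) → ℂ} {w : Fin n → ℂ} {i : Fin n} {r M : ℝ}
    (hr : 0 < r) (hg : ∀ t ∈ closedBall (w i) r, DifferentiableAt ℂ g (Function.update w i t))
    (hM : ∀ t ∈ closedBall (w i) r, ‖g (Function.update w i t)‖ ≤ M) (k : ℕ) :
    ‖(pderivC i)^[k] g w‖ ≤ k.factorial / r ^ k * M := by
  have hd : DiffContOnCl ℂ (fun t => g (Function.update w i t)) (ball (w i) r) := by
    refine DifferentiableOn.diffContOnCl fun t ht => ?_
    rw [closure_ball _ hr.ne'] at ht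
    exact ((hg t ht).comp t (hasDerivAt_update w i t).differentiableAt).differentiableWithinAt
  have hcauchy := norm_iteratedDeriv_le_of_forall_mem_sphere_norm_le k hr hd
    fun t ht => hM t (sphere_subset_closedBall ht)
  rw [← pderivC_iterate_update, Function.update_eq_self] at hcauchy
  rwa [div_mul_eq_mul_div]

theorem update_mem_closedBall {ι : Type*} [Fintype ι] [DecidableEq ι] {X : ι → Type*}
    [∀ i, PseudoMetricSpace (X i)] {z w : ∀ i, X i} {r : ℝ} (hw : w ∈ closedBall z r) {i : ι}
    {t : X i} (ht : t ∈ closedBall (z i) r) : Function.update w i t ∈ closedBall z r := by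
  have hr : 0 ≤ r := nonempty_closedBall.1 ⟨w, hw⟩
  rw [closedBall_pi z hr] at hw ⊢
  exact (update_mem_pi_iff_of_mem hw).2 fun _ => ht

theorem norm_multiDerivAlong_le (α : Fin n → ℕ) {l : List (Fin n)} (hl : l.Nodup)
    {f : (Fin n → ℂ) → ℂ} (hD : IsOpen D) (hf : DifferentiableOn ℂ f D) {z w : Fin n → ℂ}
    {r M : ℝ} (hr : 0 < r) (hz : closedBall z r ⊆ D) (hM : ∀ y ∈ closedBall z r, ‖f y‖ ≤ M)
    (hw : w ∈ closedBall z r) (hwl : ∀ i ∈ l, w i = z i) :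
    ‖multiDerivAlong α l f w‖ ≤ (l.map fun i => ((α i).factorial : ℝ) / r ^ α i).prod * M := by
  induction l generalizing w with
  | nil => simpa only [multiDerivAlong, List.foldr_nil, List.map_nil, List.prod_nil, one_mul]
      using hM w hw
  | cons i l ih =>
    obtain ⟨hil, hl⟩ := List.nodup_cons.1 hl
    obtain ⟨hwi, hwl⟩ := List.forall_mem_cons.1 hwl
    have hball : ∀ t ∈ closedBall (w i) r, Function.update w i t ∈ closedBall z r := fun t ht =>
      update_mem_closedBall hw (hwi ▸ ht)
    have hstep := norm_pderivC_iterate_le (i := i) (g := multiDerivAlong α l f) hr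
      (fun t ht => ((isHolomorphicOperatorOn_multiDerivAlong hD α l).differentiableOn
        hf).differentiableAt (hD.mem_nhds (hz (hball t ht))))
      (fun t ht => ih hl (hball t ht) fun j hj => by
        rw [Function.update_of_ne (ne_of_mem_of_not_mem hj hil), hwl j hj]) (α i)
    rwa [List.map_cons, List.prod_cons, mul_assoc]

theorem norm_multiDeriv_div_mfact_le (α : Fin n → ℕ) {f : (Fin n → ℂ) → ℂ} (hD : IsOpen D)
    (hf : DifferentiableOn ℂ f D) {z : Fin n → ℂ} {r M : ℝ} (hr : 0 < r)
    (hz : closedBall z r ⊆ D) (hM : ∀ w ∈ closedBall z r, ‖f w‖ ≤ M) :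
    ‖multiDeriv α f z / (mfact α : ℂ)‖ ≤ M * r⁻¹ ^ mdeg α := by
  have hpos : (0 : ℝ) < mfact α := by
    exact_mod_cast Finset.prod_pos fun i _ => Nat.factorial_pos (α i)
  have hprod : ((List.finRange n).map fun i => ((α i).factorial : ℝ) / r ^ α i).prod =
      mfact α * r⁻¹ ^ mdeg α := by
    rw [← List.ofFn_eq_map, List.prod_ofFn, Finset.prod_div_distrib, Finset.prod_pow_eq_pow_sum,
      mfact, mdeg, Nat.cast_prod, inv_pow, div_eq_mul_inv]
  rw [norm_div, Complex.norm_natCast, div_le_iff₀ hpos]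
  calc ‖multiDeriv α f z‖ ≤ mfact α * r⁻¹ ^ mdeg α * M := hprod ▸
        norm_multiDerivAlong_le α (List.nodup_finRange n) hD hf hr hz hM
          (mem_closedBall_self hr.le) fun _ _ => rfl
    _ = M * r⁻¹ ^ mdeg α * mfact α := by ring

end PartialDerivatives

section XiAction

open Metric Set

variable {n : ℕ} {D : Set (Fin n → ℂ)} {ξ : (Fin n → ℕ) → ℂ} {f g : (Fin n → ℂ) → ℂ}
  {z : Fin n → ℂ}

theorem norm_xiAct_term_le (hD : IsOpen D) (hf : DifferentiableOn ℂ f D) {r M : ℝ} (hr : 0 < r)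
    (hz : closedBall z r ⊆ D) (hM : ∀ w ∈ closedBall z r, ‖f w‖ ≤ M) (α : Fin n → ℕ) :
    ‖ξ α * multiDeriv α f z / (mfact α : ℂ)‖ ≤ M * (‖ξ α‖ * r⁻¹ ^ mdeg α) :=
  calc ‖ξ α * multiDeriv α f z / (mfact α : ℂ)‖
      = ‖ξ α‖ * ‖multiDeriv α f z / (mfact α : ℂ)‖ := by rw [mul_div_assoc, norm_mul]
    _ ≤ ‖ξ α‖ * (M * r⁻¹ ^ mdeg α) := by
      gcongr
      exact norm_multiDeriv_div_mfact_le α hD hf hr hz hM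
    _ = M * (‖ξ α‖ * r⁻¹ ^ mdeg α) := by ring

theorem norm_xiAct_le (hξ : MemL1 ξ) (hD : IsOpen D) (hf : DifferentiableOn ℂ f D) {r M : ℝ}
    (hr : 0 < r) (hz : closedBall z r ⊆ D) (hM : ∀ w ∈ closedBall z r, ‖f w‖ ≤ M) :
    ‖xiAct ξ f z‖ ≤ M * ∑' α : Fin n → ℕ, ‖ξ α‖ * r⁻¹ ^ mdeg α :=
  tsum_of_norm_bounded ((hξ _ (inv_pos.2 hr)).hasSum.mul_left M)
    (norm_xiAct_term_le hD hf hr hz hM)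

theorem summable_xiAct (hξ : MemL1 ξ) (hD : IsOpen D) (hf : DifferentiableOn ℂ f D) (hz : z ∈ D) :
    Summable fun α : Fin n → ℕ => ξ α * multiDeriv α f z / (mfact α : ℂ) := by
  obtain ⟨r, hr, hrD⟩ := nhds_basis_closedBall.mem_iff.1 (hD.mem_nhds hz)
  obtain ⟨M, hM⟩ := (isCompact_closedBall z r).exists_bound_of_continuousOn
    (hf.continuousOn.mono hrD)
  exact Summable.of_norm_bounded ((hξ _ (inv_pos.2 hr)).mul_left M)
    (norm_xiAct_term_le hD hf hr hrD hM)

theorem xiAct_congr (hD : IsOpen D) (hfg : EqOn f g D) (hz : z ∈ D) :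
    xiAct ξ f z = xiAct ξ g z := by
  simp only [xiAct, (isHolomorphicOperatorOn_multiDeriv hD _).congr hfg hz]

theorem xiAct_add (hξ : MemL1 ξ) (hD : IsOpen D) (hf : DifferentiableOn ℂ f D)
    (hg : DifferentiableOn ℂ g D) (hz : z ∈ D) :
    xiAct ξ (f + g) z = xiAct ξ f z + xiAct ξ g z := by
  simp only [xiAct, (isHolomorphicOperatorOn_multiDeriv hD _).add hf hg hz, Pi.add_apply, mul_add,
    add_div, (summable_xiAct hξ hD hf hz).tsum_add (summable_xiAct hξ hD hg hz)]

theorem xiAct_smul (c : ℂ) : xiAct ξ (c • f) z = c * xiAct ξ f z := by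
  have hderiv : ∀ α, multiDeriv α (c • f) z = c * multiDeriv α f z := fun α =>
    (isHolomorphicOperatorOn_multiDeriv isOpen_univ α).smul c f (mem_univ z)
  simp only [xiAct, hderiv, mul_left_comm (ξ _) c, mul_div_assoc, tsum_mul_left]

end XiAction

section MeanValueInequality

open Metric Set

theorem measurePreserving_of_isometryEquiv {V : Type*} [NormedAddCommGroup V] [NormedSpace ℝ V]
    [FiniteDimensional ℝ V] [MeasurableSpace V] [BorelSpace V] (ν : Measure V)
    [ν.IsAddHaarMeasure] (e : V ≃ᵢ V) : MeasurePreserving e ν ν := by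
  rw [Measure.isAddLeftInvariant_eq_smul ν μH[Module.finrank ℝ V]]
  exact (e.measurePreserving_hausdorffMeasure _).smul_measure _

theorem enorm_le_laverage_circleMap {F : Type*} [NormedAddCommGroup F] [NormedSpace ℂ F]
    [CompleteSpace F] {φ : ℂ → F} {c : ℂ} {R : ℝ} (hφ : DiffContOnCl ℂ φ (ball c |R|)) :
    ‖φ c‖ₑ ≤ ⨍⁻ θ in Ioc 0 (2 * Real.pi), ‖φ (circleMap c R θ)‖ₑ ∂volume := by
  rw [← hφ.circleAverage, Real.circleAverage_eq_intervalAverage,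
    uIoc_of_le Real.two_pi_pos.le]
  exact enorm_integral_le_lintegral_enorm _

variable {E : Type*} [NormedAddCommGroup E] [NormedSpace ℂ E]

theorem isometry_circle_smul (a : Circle) : Isometry fun v : E => a • v :=
  Isometry.of_dist_eq fun v w => by
    rw [Circle.smul_def, Circle.smul_def, dist_smul₀, Circle.norm_coe, one_mul]

variable [MeasurableSpace E] [BorelSpace E]

theorem lintegral_lintegral_circle_smul [SecondCountableTopology E] {Ω : Type*} [MeasurableSpace Ω]
    (ν : Measure Ω) [IsProbabilityMeasure ν] {a : Ω → Circle} (ha : Measurable fun t => (a t : ℂ))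
    {μ : Measure E} [SFinite μ] (hμ : ∀ b : Circle, MeasurePreserving (fun v : E => b • v) μ μ)
    {G : E → ℝ≥0∞} (hG : AEMeasurable G μ) : ∫⁻ v, ∫⁻ t, G (a t • v) ∂ν ∂μ = ∫⁻ v, G v ∂μ := by
  have hmeas : Measurable fun p : Ω × E => a p.1 • p.2 := by
    simp only [Circle.smul_def]
    exact (ha.comp measurable_fst).smul measurable_snd
  have hskew : MeasurePreserving (fun p : Ω × E => (p.1, a p.1 • p.2)) (ν.prod μ) (ν.prod μ) :=
    (MeasurePreserving.id ν).skew_product hmeas (ae_of_all _ fun t => (hμ (a t)).map_eq)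
  have hGa : AEMeasurable (Function.uncurry fun t v => G (a t • v)) (ν.prod μ) :=
    hG.comp_snd.comp_quasiMeasurePreserving hskew.quasiMeasurePreserving
  calc ∫⁻ v, ∫⁻ t, G (a t • v) ∂ν ∂μ = ∫⁻ t, ∫⁻ v, G (a t • v) ∂μ ∂ν :=
        (lintegral_lintegral_swap hGa).symm
    _ = ∫⁻ _, ∫⁻ v, G v ∂μ ∂ν := by
      refine lintegral_congr fun t => ?_
      rw [← (hμ (a t)).map_eq] at hG
      rw [← lintegral_map' hG (hμ (a t)).aemeasurable, (hμ (a t)).map_eq]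
    _ = ∫⁻ v, G v ∂μ := by rw [lintegral_const, measure_univ, mul_one]

variable [FiniteDimensional ℂ E] (μ : Measure E) [μ.IsAddHaarMeasure]

theorem measurePreserving_circle_smul_closedBall (R : ℝ) (a : Circle) :
    MeasurePreserving (fun v : E => a • v) (μ.restrict (closedBall 0 R))
      (μ.restrict (closedBall 0 R)) := by
  have hpre : (fun v : E => a • v) ⁻¹' closedBall 0 R = closedBall 0 R := by
    simpa only [smul_zero] using (isometry_circle_smul a).preimage_closedBall (0 : E) R
  have ha : MeasurePreserving (fun v : E => a • v) μ μ :=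
    measurePreserving_of_isometryEquiv μ ⟨MulAction.toPerm a, isometry_circle_smul a⟩
  simpa only [hpre] using
    ha.restrict_preimage (measurableSet_closedBall (x := (0 : E)) (ε := R))

variable {F : Type*} [NormedAddCommGroup F] [NormedSpace ℂ F] [CompleteSpace F]

theorem enorm_zero_mul_measure_closedBall_le {g : E → F} {R : ℝ} (hR : 0 < R)
    (hg : DiffContOnCl ℂ g (ball 0 R)) :
    ‖g 0‖ₑ * μ (closedBall 0 R) ≤ ∫⁻ v in closedBall 0 R, ‖g v‖ₑ ∂μ := by
  have hmean : ∀ v ∈ closedBall (0 : E) R,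
      ‖g 0‖ₑ ≤ ⨍⁻ θ in Ioc 0 (2 * Real.pi), ‖g (Circle.exp θ • v)‖ₑ ∂volume := by
    intro v hv
    have hmaps : MapsTo (fun t : ℂ => t • v) (ball 0 |1|) (ball 0 R) := by
      intro t ht
      rw [abs_one, mem_ball_zero_iff] at ht
      rw [mem_closedBall_zero_iff] at hv
      rw [mem_ball_zero_iff, norm_smul]
      calc ‖t‖ * ‖v‖ ≤ ‖t‖ * R := by gcongr
        _ < R := mul_lt_of_lt_one_left hR ht
    have hcircle : ∀ θ, circleMap 0 1 θ • v = Circle.exp θ • v := fun θ => by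
      rw [circleMap_zero, ofReal_one, one_mul, Circle.smul_def, Circle.coe_exp]
    have hd : Differentiable ℂ fun t : ℂ => t • v := by fun_prop
    simpa only [Function.comp_apply, zero_smul, hcircle] using
      enorm_le_laverage_circleMap (hg.comp hd.diffContOnCl hmaps)
  have hcont : ContinuousOn (fun v => ‖g v‖ₑ) (closedBall 0 R) := hg.continuousOn_ball.enorm
  calc ‖g 0‖ₑ * μ (closedBall 0 R) = ∫⁻ _ in closedBall 0 R, ‖g 0‖ₑ ∂μ :=
        (setLIntegral_const _ _).symm
    _ ≤ ∫⁻ v in closedBall 0 R, ⨍⁻ θ in Ioc 0 (2 * Real.pi), ‖g (Circle.exp θ • v)‖ₑ ∂volume ∂μ :=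
      setLIntegral_mono' measurableSet_closedBall hmean
    _ = ∫⁻ v in closedBall 0 R, ‖g v‖ₑ ∂μ := by
      have : NeZero (volume.restrict (Ioc 0 (2 * Real.pi))) := ⟨by simp [Real.pi_pos]⟩
      have : ProperSpace E := FiniteDimensional.proper ℂ E
      exact lintegral_lintegral_circle_smul _
        (continuous_subtype_val.comp Circle.exp.continuous).measurable
        (measurePreserving_circle_smul_closedBall μ R) (hcont.aemeasurable measurableSet_closedBall)

theorem enorm_mul_measure_closedBall_le {f : E → F} {w : E} {R : ℝ} (hR : 0 < R)
    (hf : DiffContOnCl ℂ f (ball w R)) :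
    ‖f w‖ₑ * μ (closedBall w R) ≤ ∫⁻ x in closedBall w R, ‖f x‖ₑ ∂μ := by
  have hball : (w + ·) ⁻¹' ball w R = ball 0 R := by
    rw [preimage_add_ball, sub_self]
  have hclosedBall : (w + ·) ⁻¹' closedBall w R = closedBall 0 R := by
    rw [preimage_add_closedBall, sub_self]
  have hd : Differentiable ℂ (w + · : E → E) := by fun_prop
  have hcentred := enorm_zero_mul_measure_closedBall_le μ hR
    (hf.comp hd.diffContOnCl (hball ▸ mapsTo_preimage _ _))
  rw [Function.comp_apply, add_zero] at hcentred
  rw [Measure.addHaar_closedBall_center]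
  refine hcentred.trans_eq ?_
  rw [← hclosedBall]
  exact (measurePreserving_add_left μ w).setLIntegral_comp_preimage_emb
    (measurableEmbedding_addLeft w) (fun x => ‖f x‖ₑ) _

end MeanValueInequality

section WeightedEstimates

open Metric Set

theorem ofReal_norm_sq {F : Type*} [SeminormedAddGroup F] (a : F) :
    ENNReal.ofReal (‖a‖ ^ 2) = ‖a‖ₑ ^ 2 := by
  rw [ENNReal.ofReal_pow (norm_nonneg a), ofReal_norm]

variable {n : ℕ} {D : Set (Fin n → ℂ)} {ψ : (Fin n → ℂ) → ℝ}

theorem wL2_integrand_eq (f : (Fin n → ℂ) → ℂ) (x : Fin n → ℂ) :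
    ENNReal.ofReal (‖f x‖ ^ 2 * Real.exp (-ψ x)) =
      ENNReal.ofReal (Real.exp (-ψ x)) * ‖f x‖ₑ ^ 2 := by
  rw [ENNReal.ofReal_mul (sq_nonneg _), ofReal_norm_sq, mul_comm]

theorem wL2_congr (hD : MeasurableSet D) {f g : (Fin n → ℂ) → ℂ} (hfg : EqOn f g D) :
    wL2 D ψ f = wL2 D ψ g :=
  setLIntegral_congr_fun hD fun x hx => by rw [hfg hx]

theorem setLIntegral_enorm_sq_le_wL2 {S : Set (Fin n → ℂ)} (hS : MeasurableSet S) (hSD : S ⊆ D)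
    {c : ℝ} (hc : ∀ x ∈ S, ψ x ≤ c) (f : (Fin n → ℂ) → ℂ) :
    ∫⁻ x in S, ‖f x‖ₑ ^ 2 ≤ ENNReal.ofReal (Real.exp c) * wL2 D ψ f := by
  have hone : ∀ x ∈ S, 1 ≤ ENNReal.ofReal (Real.exp c) * ENNReal.ofReal (Real.exp (-ψ x)) :=
    fun x hx => by
      rw [← ENNReal.ofReal_mul (Real.exp_nonneg _), ENNReal.one_le_ofReal, ← Real.exp_add,
        Real.one_le_exp_iff]
      linarith [hc x hx]
  calc ∫⁻ x in S, ‖f x‖ₑ ^ 2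
      ≤ ∫⁻ x in S, ENNReal.ofReal (Real.exp c) *
          ENNReal.ofReal (‖f x‖ ^ 2 * Real.exp (-ψ x)) := by
        refine setLIntegral_mono' hS fun x hx => ?_
        rw [wL2_integrand_eq, ← mul_assoc]
        exact le_mul_of_one_le_left zero_le (hone x hx)
    _ = ENNReal.ofReal (Real.exp c) * ∫⁻ x in S, ENNReal.ofReal (‖f x‖ ^ 2 * Real.exp (-ψ x)) :=
        lintegral_const_mul' _ _ ENNReal.ofReal_ne_top
    _ ≤ ENNReal.ofReal (Real.exp c) * wL2 D ψ f := by
        gcongr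
        exact lintegral_mono_set hSD

theorem enorm_sq_mul_volume_le_wL2 {w : Fin n → ℂ} {r c : ℝ} (hr : 0 < r)
    (hw : closedBall w r ⊆ D) (hc : ∀ x ∈ closedBall w r, ψ x ≤ c) {f : (Fin n → ℂ) → ℂ}
    (hf : DifferentiableOn ℂ f D) :
    ‖f w‖ₑ ^ 2 * volume (closedBall w r) ≤ ENNReal.ofReal (Real.exp c) * wL2 D ψ f := by
  have hf' : DiffContOnCl ℂ (fun x => f x ^ 2) (ball w r) :=
    ((hf.fun_pow 2).mono (closure_ball_subset_closedBall.trans hw)).diffContOnCl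
  calc ‖f w‖ₑ ^ 2 * volume (closedBall w r) ≤ ∫⁻ x in closedBall w r, ‖f x‖ₑ ^ 2 := by
        simpa only [enorm_pow] using enorm_mul_measure_closedBall_le volume hr hf'
    _ ≤ ENNReal.ofReal (Real.exp c) * wL2 D ψ f :=
        setLIntegral_enorm_sq_le_wL2 measurableSet_closedBall hw hc f

theorem exists_enorm_sq_le_wL2 (hD : IsOpen D) {x : Fin n → ℂ} (hx : x ∈ D)
    (hψ : IsBoundedUnder (· ≤ ·) (𝓝 x) ψ) :
    ∃ r > 0, closedBall x r ⊆ D ∧ ∃ C : ℝ≥0∞, C ≠ ⊤ ∧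
      ∀ f : (Fin n → ℂ) → ℂ, DifferentiableOn ℂ f D → ∀ w ∈ closedBall x r,
        ‖f w‖ₑ ^ 2 ≤ C * wL2 D ψ f := by
  obtain ⟨c, hc⟩ := hψ
  obtain ⟨ε, hε, hball⟩ := nhds_basis_closedBall.mem_iff.1
    ((eventually_map.1 hc).and (hD.mem_nhds hx))
  set r := ε / 2 with hr_def
  have hr : 0 < r := half_pos hε
  have hsub : ∀ w ∈ closedBall x r, closedBall w r ⊆ closedBall x ε := fun w hw =>
    closedBall_subset_closedBall' (by linarith [mem_closedBall.1 hw])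
  refine ⟨r, hr, fun y hy => (hball (hsub y hy (mem_closedBall_self hr.le))).2,
    ENNReal.ofReal (Real.exp c) / volume (closedBall (0 : Fin n → ℂ) r),
    ENNReal.div_ne_top ENNReal.ofReal_ne_top (measure_closedBall_pos _ _ hr).ne',
    fun f hf w hw => ?_⟩
  have hmean := enorm_sq_mul_volume_le_wL2 hr (fun y hy => (hball (hsub w hw hy)).2)
    (fun y hy => (hball (hsub w hw hy)).1) hf
  rw [Measure.addHaar_closedBall_center] at hmean
  rwa [ENNReal.mul_comm_div, mul_div_assoc', ENNReal.le_div_iff_mul_le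
    (Or.inl (measure_closedBall_pos _ _ hr).ne') (Or.inl measure_closedBall_lt_top.ne)]

end WeightedEstimates

section BergmanSpace

open Metric Set

variable {n : ℕ} {D : Set (Fin n → ℂ)} {ψ : (Fin n → ℂ) → ℝ}

/-- The measure `e^{-ψ} dV` on `D`, whose `L²` space contains the weighted Bergman space. -/
def weightMeasure (D : Set (Fin n → ℂ)) (ψ : (Fin n → ℂ) → ℝ) : Measure (Fin n → ℂ) :=
  (volume.restrict D).withDensity fun x => ENNReal.ofReal (Real.exp (-ψ x))

theorem aemeasurable_exp_neg (hψ : AEMeasurable ψ (volume.restrict D)) :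
    AEMeasurable (fun x => ENNReal.ofReal (Real.exp (-ψ x))) (volume.restrict D) :=
  (Real.measurable_exp.comp_aemeasurable hψ.neg).ennreal_ofReal

theorem weightMeasure_absolutelyContinuous : weightMeasure D ψ ≪ volume.restrict D :=
  withDensity_absolutelyContinuous _ _

theorem absolutelyContinuous_weightMeasure (hψ : AEMeasurable ψ (volume.restrict D)) :
    volume.restrict D ≪ weightMeasure D ψ :=
  withDensity_absolutelyContinuous' (aemeasurable_exp_neg hψ)
    (Eventually.of_forall fun x => by simp [Real.exp_pos])

theorem wL2_eq_lintegral (hψ : AEMeasurable ψ (volume.restrict D)) (f : (Fin n → ℂ) → ℂ) :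
    wL2 D ψ f = ∫⁻ x, ‖f x‖ₑ ^ 2 ∂weightMeasure D ψ := by
  rw [weightMeasure, lintegral_withDensity_eq_lintegral_mul_non_measurable₀ _
    (aemeasurable_exp_neg hψ) (Eventually.of_forall fun x => ENNReal.ofReal_lt_top)]
  exact lintegral_congr fun x => wL2_integrand_eq f x

theorem eLpNorm_sq_eq_wL2 (hψ : AEMeasurable ψ (volume.restrict D)) (f : (Fin n → ℂ) → ℂ) :
    eLpNorm f 2 (weightMeasure D ψ) ^ 2 = wL2 D ψ f := by
  rw [wL2_eq_lintegral hψ, ← ENNReal.rpow_two]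
  simpa only [NNReal.coe_ofNat, ENNReal.coe_ofNat, ENNReal.rpow_ofNat] using
    eLpNorm_nnreal_pow_eq_lintegral (f := f) (μ := weightMeasure D ψ) (p := 2) two_ne_zero

theorem MemA2.memLp (hD : MeasurableSet D) (hψ : AEMeasurable ψ (volume.restrict D))
    {f : (Fin n → ℂ) → ℂ} (hf : MemA2 D ψ f) : MemLp f 2 (weightMeasure D ψ) := by
  refine ⟨(hf.1.continuousOn.aestronglyMeasurable hD).mono_ac weightMeasure_absolutelyContinuous,
    ?_⟩
  have hsq : eLpNorm f 2 (weightMeasure D ψ) ^ 2 < ⊤ := by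
    rw [eLpNorm_sq_eq_wL2 hψ]
    exact hf.2
  exact (ENNReal.pow_lt_top_iff.1 hsq).resolve_right two_ne_zero

/-- The weighted Bergman space `A²(D, e^{-ψ})` as a subspace of the Hilbert space `L²(e^{-ψ} dV)`:
the classes that contain a function holomorphic on `D`. -/
def bergmanSubmodule (D : Set (Fin n → ℂ)) (ψ : (Fin n → ℂ) → ℝ) :
    Submodule ℂ (Lp ℂ 2 (weightMeasure D ψ)) where
  carrier := {u | ∃ f, DifferentiableOn ℂ f D ∧ u =ᵐ[weightMeasure D ψ] f}
  zero_mem' := ⟨0, differentiableOn_const 0, Lp.coeFn_zero _ _ _⟩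
  add_mem' := by
    rintro u v ⟨f, hf, hu⟩ ⟨g, hg, hv⟩
    exact ⟨f + g, hf.add hg, (Lp.coeFn_add u v).trans (hu.add hv)⟩
  smul_mem' := by
    rintro c u ⟨f, hf, hu⟩
    exact ⟨c • f, hf.const_smul c, (Lp.coeFn_smul c u).trans (hu.const_smul c)⟩

/-- A representative of an element of the Bergman space that is holomorphic on `D`. For `D`
open and `ψ` measurable it is unique on `D`; its values outside `D` are arbitrary. -/
def bergmanRep (u : bergmanSubmodule D ψ) : (Fin n → ℂ) → ℂ :=
  u.2.choose

theorem differentiableOn_bergmanRep (u : bergmanSubmodule D ψ) :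
    DifferentiableOn ℂ (bergmanRep u) D :=
  u.2.choose_spec.1

theorem coe_ae_eq_bergmanRep (u : bergmanSubmodule D ψ) :
    (u : Lp ℂ 2 (weightMeasure D ψ)) =ᵐ[weightMeasure D ψ] bergmanRep u :=
  u.2.choose_spec.2

theorem enorm_sq_eq_wL2_bergmanRep (hψ : AEMeasurable ψ (volume.restrict D))
    (u : bergmanSubmodule D ψ) : ‖u‖ₑ ^ 2 = wL2 D ψ (bergmanRep u) := by
  rw [← eLpNorm_sq_eq_wL2 hψ, ← eLpNorm_congr_ae (coe_ae_eq_bergmanRep u), ← Lp.enorm_def]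
  rfl

theorem memA2_bergmanRep (hψ : AEMeasurable ψ (volume.restrict D)) (u : bergmanSubmodule D ψ) :
    MemA2 D ψ (bergmanRep u) := by
  refine ⟨differentiableOn_bergmanRep u, ?_⟩
  rw [← enorm_sq_eq_wL2_bergmanRep hψ]
  exact ENNReal.pow_lt_top enorm_lt_top

theorem eqOn_bergmanRep (hD : IsOpen D) (hψ : AEMeasurable ψ (volume.restrict D))
    {u : bergmanSubmodule D ψ} {f : (Fin n → ℂ) → ℂ} (hf : DifferentiableOn ℂ f D)
    (hu : (u : Lp ℂ 2 (weightMeasure D ψ)) =ᵐ[weightMeasure D ψ] f) : EqOn (bergmanRep u) f D :=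
  Measure.eqOn_open_of_ae_eq
    ((absolutelyContinuous_weightMeasure hψ).ae_le ((coe_ae_eq_bergmanRep u).symm.trans hu)) hD
    (differentiableOn_bergmanRep u).continuousOn hf.continuousOn

theorem eqOn_bergmanRep_add (hD : IsOpen D) (hψ : AEMeasurable ψ (volume.restrict D))
    (u v : bergmanSubmodule D ψ) : EqOn (bergmanRep (u + v)) (bergmanRep u + bergmanRep v) D :=
  eqOn_bergmanRep hD hψ ((differentiableOn_bergmanRep u).add (differentiableOn_bergmanRep v))
    ((Lp.coeFn_add u.1 v.1).trans ((coe_ae_eq_bergmanRep u).add (coe_ae_eq_bergmanRep v)))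

theorem eqOn_bergmanRep_sub (hD : IsOpen D) (hψ : AEMeasurable ψ (volume.restrict D))
    (u v : bergmanSubmodule D ψ) : EqOn (bergmanRep (u - v)) (bergmanRep u - bergmanRep v) D :=
  eqOn_bergmanRep hD hψ ((differentiableOn_bergmanRep u).sub (differentiableOn_bergmanRep v))
    ((Lp.coeFn_sub u.1 v.1).trans ((coe_ae_eq_bergmanRep u).sub (coe_ae_eq_bergmanRep v)))

theorem eqOn_bergmanRep_smul (hD : IsOpen D) (hψ : AEMeasurable ψ (volume.restrict D)) (c : ℂ)
    (u : bergmanSubmodule D ψ) : EqOn (bergmanRep (c • u)) (c • bergmanRep u) D :=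
  eqOn_bergmanRep hD hψ ((differentiableOn_bergmanRep u).const_smul c)
    ((Lp.coeFn_smul c u.1).trans ((coe_ae_eq_bergmanRep u).const_smul c))

theorem MemA2.exists_eqOn_bergmanRep (hD : IsOpen D) (hψ : AEMeasurable ψ (volume.restrict D))
    {f : (Fin n → ℂ) → ℂ} (hf : MemA2 D ψ f) :
    ∃ u : bergmanSubmodule D ψ, EqOn (bergmanRep u) f D := by
  have hLp := hf.memLp hD.measurableSet hψ
  exact ⟨⟨hLp.toLp, f, hf.1, hLp.coeFn_toLp⟩, eqOn_bergmanRep hD hψ hf.1 hLp.coeFn_toLp⟩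

theorem exists_bergmanRep_ne_zero_iff (hD : IsOpen D) (hψ : AEMeasurable ψ (volume.restrict D))
    (u : bergmanSubmodule D ψ) : (∃ x ∈ D, bergmanRep u x ≠ 0) ↔ u ≠ 0 := by
  refine ⟨?_, fun hu => ?_⟩
  · rintro ⟨x, hx, hux⟩ rfl
    exact hux (eqOn_bergmanRep hD hψ (differentiableOn_const 0) (Lp.coeFn_zero _ _ _) hx)
  · contrapose! hu
    have hnorm : ‖u‖ₑ ^ 2 = 0 := by
      rw [enorm_sq_eq_wL2_bergmanRep hψ, wL2_congr (g := 0) hD.measurableSet hu]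
      simp [wL2]
    exact enorm_eq_zero.1 (sq_eq_zero_iff.1 hnorm)

theorem exists_norm_bergmanRep_le (hD : IsOpen D) (hψ : AEMeasurable ψ (volume.restrict D))
    {x : Fin n → ℂ} (hx : x ∈ D) (hψx : IsBoundedUnder (· ≤ ·) (𝓝 x) ψ) :
    ∃ r > 0, closedBall x r ⊆ D ∧ ∃ K : ℝ,
      ∀ u : bergmanSubmodule D ψ, ∀ w ∈ closedBall x r, ‖bergmanRep u w‖ ≤ K * ‖u‖ := by
  obtain ⟨r, hr, hrD, C, hC, hbound⟩ := exists_enorm_sq_le_wL2 hD hx hψx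
  refine ⟨r, hr, hrD, √C.toReal, fun u w hw => ?_⟩
  have hsq : ‖bergmanRep u w‖ ^ 2 ≤ C.toReal * ‖u‖ ^ 2 := by
    have henorm := hbound (bergmanRep u) (differentiableOn_bergmanRep u) w hw
    rw [← enorm_sq_eq_wL2_bergmanRep hψ] at henorm
    simpa only [ENNReal.toReal_mul, ENNReal.toReal_pow, toReal_enorm] using
      ENNReal.toReal_mono (ENNReal.mul_ne_top hC (ENNReal.pow_ne_top enorm_ne_top)) henorm
  refine le_of_sq_le_sq ?_ (by positivity)
  rwa [mul_pow, Real.sq_sqrt ENNReal.toReal_nonneg]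

theorem exists_uniformCauchySeqOn_bergmanRep (hD : IsOpen D)
    (hψ : AEMeasurable ψ (volume.restrict D)) {x : Fin n → ℂ} (hx : x ∈ D)
    (hψx : IsBoundedUnder (· ≤ ·) (𝓝 x) ψ) {ι : Type*} {l : Filter ι}
    {u : ι → bergmanSubmodule D ψ}
    (hu : Tendsto (fun p : ι × ι => (u p.1, u p.2)) (l ×ˢ l) (uniformity _)) :
    ∃ U ⊆ D, IsOpen U ∧ x ∈ U ∧ UniformCauchySeqOn (fun i => bergmanRep (u i)) l U := by
  obtain ⟨r, hr, hrD, K, hK⟩ := exists_norm_bergmanRep_le hD hψ hx hψx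
  have hballD : ball x r ⊆ D := ball_subset_closedBall.trans hrD
  refine ⟨ball x r, hballD, isOpen_ball, mem_ball_self hr, fun V hV => ?_⟩
  obtain ⟨ε, hε, hεV⟩ := mem_uniformity_dist.1 hV
  have hlim : Tendsto (fun p : ι × ι => K * dist (u p.1) (u p.2)) (l ×ˢ l) (𝓝 0) := by
    simpa only [mul_zero] using (tendsto_uniformity_iff_dist_tendsto_zero.1 hu).const_mul K
  filter_upwards [hlim.eventually_lt_const hε] with p hp w hw
  refine hεV ?_
  calc dist (bergmanRep (u p.1) w) (bergmanRep (u p.2) w)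
      = ‖bergmanRep (u p.1 - u p.2) w‖ := by
        rw [eqOn_bergmanRep_sub hD hψ _ _ (hballD hw), Pi.sub_apply, dist_eq_norm]
    _ ≤ K * dist (u p.1) (u p.2) := by
        rw [dist_eq_norm]
        exact hK _ w (ball_subset_closedBall hw)
    _ < ε := hp

theorem isClosed_bergmanSubmodule (hD : IsOpen D) (hψ : AEMeasurable ψ (volume.restrict D))
    (hψD : ∀ x ∈ D, IsBoundedUnder (· ≤ ·) (𝓝 x) ψ) :
    IsClosed (bergmanSubmodule D ψ : Set (Lp ℂ 2 (weightMeasure D ψ))) := by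
  refine IsSeqClosed.isClosed fun u v hu huv => ?_
  lift u to ℕ → bergmanSubmodule D ψ using hu
  have hcauchy : Cauchy (map u atTop) :=
    (isUniformInducing_val _).cauchy_map_iff.1 huv.cauchySeq
  obtain ⟨g, hg, hlim⟩ := exists_differentiableOn_of_uniformCauchySeqOn
    (Eventually.of_forall fun k => differentiableOn_bergmanRep (u k))
    fun x hx => exists_uniformCauchySeqOn_bergmanRep hD hψ hx (hψD x hx)
      (cauchy_map_iff.1 hcauchy).2
  refine ⟨g, hg, ?_⟩
  obtain ⟨ns, hns, hae⟩ := (tendstoInMeasure_of_tendsto_Lp huv).exists_seq_tendsto_ae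
  have hmem : ∀ᵐ x ∂weightMeasure D ψ, x ∈ D :=
    weightMeasure_absolutelyContinuous.ae_le (ae_restrict_mem hD.measurableSet)
  filter_upwards [hae, hmem, ae_all_iff.2 fun k => coe_ae_eq_bergmanRep (u k)] with x hx hxD hrep
  simp only [hrep] at hx
  exact tendsto_nhds_unique hx ((hlim x hxD).comp hns.tendsto_atTop)

end BergmanSpace

section ExtremalFunction

theorem exists_ne_zero_norm_apply_eq {𝕜 H : Type*} [RCLike 𝕜] [NormedAddCommGroup H]
    [InnerProductSpace 𝕜 H] [CompleteSpace H] [Nontrivial H] (L : StrongDual 𝕜 H) :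
    ∃ u ≠ 0, ‖L u‖ = ‖L‖ * ‖u‖ := by
  rcases eq_or_ne L 0 with rfl | hL
  · obtain ⟨u, hu⟩ := exists_ne (0 : H)
    exact ⟨u, hu, by simp⟩
  · set u := (InnerProductSpace.toDual 𝕜 H).symm L with hu
    have hLu : L u = inner 𝕜 u u := InnerProductSpace.toDual_symm_apply.symm
    refine ⟨u, by simpa [hu] using hL, ?_⟩
    rw [hLu, inner_self_eq_norm_sq_to_K, norm_pow, RCLike.norm_ofReal, abs_norm, sq, hu,
      LinearIsometryEquiv.norm_map]

variable {n : ℕ} {D : Set (Fin n → ℂ)} {ψ : (Fin n → ℂ) → ℝ} {ξ : (Fin n → ℕ) → ℂ}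
  {z : Fin n → ℂ}

theorem exists_clm_eq_xiAct (hD : IsOpen D) (hz : z ∈ D) (hψ : AEMeasurable ψ (volume.restrict D))
    (hψz : IsBoundedUnder (· ≤ ·) (𝓝 z) ψ) (hξ : MemL1 ξ) :
    ∃ L : StrongDual ℂ (bergmanSubmodule D ψ), ∀ u, L u = xiAct ξ (bergmanRep u) z := by
  obtain ⟨r, hr, hrD, K, hK⟩ := exists_norm_bergmanRep_le hD hψ hz hψz
  let ℓ : bergmanSubmodule D ψ →ₗ[ℂ] ℂ :=
    { toFun := fun u => xiAct ξ (bergmanRep u) z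
      map_add' := fun u v => by
        rw [xiAct_congr hD (eqOn_bergmanRep_add hD hψ u v) hz,
          xiAct_add hξ hD (differentiableOn_bergmanRep u) (differentiableOn_bergmanRep v) hz]
      map_smul' := fun c u => by
        rw [xiAct_congr hD (eqOn_bergmanRep_smul hD hψ c u) hz, xiAct_smul, RingHom.id_apply,
          smul_eq_mul] }
  refine ⟨ℓ.mkContinuous (K * ∑' α : Fin n → ℕ, ‖ξ α‖ * r⁻¹ ^ mdeg α) fun u => ?_, fun u => rfl⟩
  rw [mul_right_comm]
  exact norm_xiAct_le hξ hD (differentiableOn_bergmanRep u) hr hrD (hK u)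

theorem xiBergman_le_enorm_sq (hD : IsOpen D) (hz : z ∈ D)
    (hψ : AEMeasurable ψ (volume.restrict D)) {L : StrongDual ℂ (bergmanSubmodule D ψ)}
    (hL : ∀ u, L u = xiAct ξ (bergmanRep u) z) : xiBergman ξ D ψ z ≤ ‖L‖ₑ ^ 2 := by
  refine iSup_le fun ⟨f, hf⟩ => ENNReal.div_le_of_le_mul ?_
  obtain ⟨u, hu⟩ := hf.exists_eqOn_bergmanRep hD hψ
  rw [ofReal_norm_sq, ← xiAct_congr hD hu hz, ← hL, ← wL2_congr hD.measurableSet hu,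
    ← enorm_sq_eq_wL2_bergmanRep hψ, ← mul_pow]
  gcongr
  exact L.le_opENorm u

theorem exists_xiBergman_eq (hD : IsOpen D) (hz : z ∈ D) (hψ : AEMeasurable ψ (volume.restrict D))
    (hψz : IsBoundedUnder (· ≤ ·) (𝓝 z) ψ) (hξ : MemL1 ξ) [CompleteSpace (bergmanSubmodule D ψ)]
    [Nontrivial (bergmanSubmodule D ψ)] :
    ∃ u : bergmanSubmodule D ψ, u ≠ 0 ∧ xiBergman ξ D ψ z =
      ENNReal.ofReal (‖xiAct ξ (bergmanRep u) z‖ ^ 2) / wL2 D ψ (bergmanRep u) := by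
  obtain ⟨L, hL⟩ := exists_clm_eq_xiAct hD hz hψ hψz hξ
  obtain ⟨u, hu, hLu⟩ := exists_ne_zero_norm_apply_eq L
  refine ⟨u, hu, le_antisymm ?_ (le_iSup_of_le ⟨bergmanRep u, memA2_bergmanRep hψ u⟩ le_rfl)⟩
  have hattained : ‖L u‖ₑ = ‖L‖ₑ * ‖u‖ₑ := by
    simp only [← ofReal_norm, hLu, ENNReal.ofReal_mul (norm_nonneg L)]
  calc xiBergman ξ D ψ z ≤ ‖L‖ₑ ^ 2 := xiBergman_le_enorm_sq hD hz hψ hL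
    _ = ‖L u‖ₑ ^ 2 / ‖u‖ₑ ^ 2 := by
      rw [hattained, mul_pow]
      exact (ENNReal.mul_div_cancel_right (pow_ne_zero 2 (enorm_ne_zero.2 hu))
        (ENNReal.pow_ne_top enorm_ne_top)).symm
    _ = _ := by rw [ofReal_norm_sq, hL, enorm_sq_eq_wL2_bergmanRep hψ]

end ExtremalFunction

section UpperSemicontinuous

variable {X : Type*} [TopologicalSpace X] {s : Set X} {ψ : X → ℝ}

theorem aemeasurable_restrict_of_upperSemicontinuousOn [MeasurableSpace X] [OpensMeasurableSpace X]
    {μ : Measure X} (hs : MeasurableSet s) (hψ : UpperSemicontinuousOn ψ s) :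
    AEMeasurable ψ (μ.restrict s) :=
  aemeasurable_restrict_of_measurable_subtype hs
    (upperSemicontinuousOn_iff_restrict.2 hψ).measurable

theorem isBoundedUnder_le_nhds_of_upperSemicontinuousOn (hs : IsOpen s)
    (hψ : UpperSemicontinuousOn ψ s) {x : X} (hx : x ∈ s) : IsBoundedUnder (· ≤ ·) (𝓝 x) ψ := by
  have hlt : ∀ᶠ y in 𝓝[s] x, ψ y < ψ x + 1 := hψ x hx _ (lt_add_one _)
  rw [hs.nhdsWithin_eq hx] at hlt
  exact isBoundedUnder_of_eventually_le (hlt.mono fun _ => le_of_lt)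

theorem PlurisubharmonicOn.upperSemicontinuousOn {E : Type*} [NormedAddCommGroup E]
    [NormedSpace ℂ E] {φ : E → ℝ} {s : Set E}
    (hφ : PlurisubharmonicOn (fun x => (φ x : EReal)) s) : UpperSemicontinuousOn φ s :=
  fun x hx y hy => by
    simpa only [EReal.coe_lt_coe_iff] using hφ.1 x hx y (EReal.coe_lt_coe_iff.2 hy)

end UpperSemicontinuous

theorem statement2_general {n : ℕ} {D : Set (Fin n → ℂ)} (hD : IsOpen D) {z : Fin n → ℂ}
    (hz : z ∈ D) {ψ : (Fin n → ℂ) → ℝ} (hψ : AEMeasurable ψ (volume.restrict D))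
    (hψD : ∀ x ∈ D, IsBoundedUnder (· ≤ ·) (𝓝 x) ψ)
    (hne : ∃ f : (Fin n → ℂ) → ℂ, MemA2 D ψ f ∧ ∃ x ∈ D, f x ≠ 0)
    {ξ : (Fin n → ℕ) → ℂ} (hξ : MemL1 ξ) :
    ∃ F₀ : (Fin n → ℂ) → ℂ, MemA2 D ψ F₀ ∧ (∃ x ∈ D, F₀ x ≠ 0) ∧
      xiBergman ξ D ψ z = ENNReal.ofReal (‖xiAct ξ F₀ z‖ ^ 2) / wL2 D ψ F₀ := by
  have : CompleteSpace (bergmanSubmodule D ψ) :=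
    (isClosed_bergmanSubmodule hD hψ hψD).completeSpace_coe
  have : Nontrivial (bergmanSubmodule D ψ) := by
    obtain ⟨f, hf, x, hx, hfx⟩ := hne
    obtain ⟨v, hv⟩ := hf.exists_eqOn_bergmanRep hD hψ
    exact nontrivial_of_ne v 0 <|
      (exists_bergmanRep_ne_zero_iff hD hψ v).1 ⟨x, hx, by rwa [hv hx]⟩
  obtain ⟨u, hu, heq⟩ := exists_xiBergman_eq hD hz hψ (hψD z hz) hξ
  exact ⟨bergmanRep u, memA2_bergmanRep hψ u, (exists_bergmanRep_ne_zero_iff hD hψ u).2 hu, heq⟩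

/-- If `A²(D, e^{-ψ}) ≠ {0}`, the supremum defining the `ξ`-Bergman kernel `K^ψ_{ξ,D}(z)`
is attained by some nonzero `F₀ ∈ A²(D, e^{-ψ})`. -/
theorem statement2 {n : ℕ} (D : Set (Fin n → ℂ)) (hDo : IsOpen D) (hDc : IsConnected D)
    (z : Fin n → ℂ) (hz : z ∈ D)
    (ψ : (Fin n → ℂ) → ℝ) (hψ : PlurisubharmonicOn (fun x => (ψ x : EReal)) D)
    (hne : ∃ f : (Fin n → ℂ) → ℂ, MemA2 D ψ f ∧ ∃ x ∈ D, f x ≠ 0)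
    (ξ : (Fin n → ℕ) → ℂ) (hξ : MemL1 ξ) :
    ∃ F₀ : (Fin n → ℂ) → ℂ, MemA2 D ψ F₀ ∧ (∃ x ∈ D, F₀ x ≠ 0) ∧
      xiBergman ξ D ψ z = ENNReal.ofReal (‖xiAct ξ F₀ z‖ ^ 2) / wL2 D ψ F₀ := by
  have hψD := hψ.upperSemicontinuousOn
  exact statement2_general hDo hz
    (aemeasurable_restrict_of_upperSemicontinuousOn hDo.measurableSet hψD)
    (fun _ => isBoundedUnder_le_nhds_of_upperSemicontinuousOn hDo hψD) hne hξ
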